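/- Let ∑_{i=1}^k αᵢ sᵢ ≥ 1 with α ∈ ℝ^k, α ≥ 0, be a valid inequality for conv(P(R,f)) whose induced lattice-free set L_α is a triangle of type T³ with f in the interior of L_α. Then the split rank of ∑_{i=1}^k αᵢ sᵢ ≥ 1 with respect to P(R,f)⁰ is finite. -/

import Mathlib

open Set Pointwise

abbrev Pt : Type := Fin 2 → ℝ

def IsIntPt (x : Pt) : Prop := ∀ j, ∃ z : ℤ, x j = (z : ℝ)

def IsRatPt (x : Pt) : Prop := ∀ j, ∃ q : ℚ, x j = (q : ℝ)

/-- The mixed-integer set `P(R,f)`. -/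
def mixedP (k : ℕ) (r : Fin k → Pt) (f : Pt) : Set (Pt × (Fin k → ℝ)) :=
  {p | IsIntPt p.1 ∧ (∀ i, 0 ≤ p.2 i) ∧ p.1 = f + ∑ i, p.2 i • r i}

/-- The linear relaxation `P(R,f)⁰`. -/
def relaxP (k : ℕ) (r : Fin k → Pt) (f : Pt) : Set (Pt × (Fin k → ℝ)) :=
  {p | (∀ i, 0 ≤ p.2 i) ∧ p.1 = f + ∑ i, p.2 i • r i}

/-- The convex cone generated by a set (all nonnegative combinations). -/
def coneGen (S : Set Pt) : Set Pt :=
  {x | ∃ (n : ℕ) (c : Fin n → ℝ) (v : Fin n → Pt),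
    (∀ j, 0 ≤ c j) ∧ (∀ j, v j ∈ S) ∧ x = ∑ j, c j • v j}

/-- The induced lattice-free set `L_α`. -/
def inducedSet (k : ℕ) (r : Fin k → Pt) (f : Pt) (α : Fin k → ℝ) : Set Pt :=
  convexHull ℝ ({f} ∪ {x | ∃ i, 0 < α i ∧ x = f + (α i)⁻¹ • r i}) +
    coneGen {x | ∃ i, α i = 0 ∧ x = r i}

def LatticeFree (S : Set Pt) : Prop := ∀ x ∈ interior S, ¬ IsIntPt x

/-- Validity of `∑ αᵢ sᵢ ≥ γ` for `conv(P(R,f))`. -/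
def ValidIneq (k : ℕ) (r : Fin k → Pt) (f : Pt) (α : Fin k → ℝ) (γ : ℝ) : Prop :=
  ∀ p ∈ mixedP k r f, γ ≤ ∑ i, α i * p.2 i

noncomputable def affDim {V : Type*} [AddCommGroup V] [Module ℝ V] (S : Set V) : ℕ :=
  Module.finrank ℝ (affineSpan ℝ S).direction

/-- Facet-defining inequality: valid and its face of the closed convex hull has
affine dimension exactly one less. -/
def IsFacet (k : ℕ) (r : Fin k → Pt) (f : Pt) (α : Fin k → ℝ) (γ : ℝ) : Prop :=
  ValidIneq k r f α γ ∧
  affDim {p ∈ closure (convexHull ℝ (mixedP k r f)) | ∑ i, α i * p.2 i = γ} + 1 =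
    affDim (convexHull ℝ (mixedP k r f))

def splitClosure (k : ℕ) (C : Set (Pt × (Fin k → ℝ))) : Set (Pt × (Fin k → ℝ)) :=
  ⋂ (π : Fin 2 → ℤ) (π₀ : ℤ),
    convexHull ℝ ((C ∩ {p | ∑ j, (π j : ℝ) * p.1 j ≤ (π₀ : ℝ)}) ∪
      (C ∩ {p | (π₀ : ℝ) + 1 ≤ ∑ j, (π j : ℝ) * p.1 j}))

def closures (k : ℕ) (r : Fin k → Pt) (f : Pt) : ℕ → Set (Pt × (Fin k → ℝ))
  | 0 => relaxP k r f
  | n + 1 => splitClosure k (closures k r f n)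

/-- The split rank of `∑ αᵢ sᵢ ≥ γ` w.r.t. `P(R,f)⁰`: least `j` such that the
inequality is valid on the `j`-th split closure, `⊤` if none exists. -/
noncomputable def splitRank (k : ℕ) (r : Fin k → Pt) (f : Pt) (α : Fin k → ℝ) (γ : ℝ) : ℕ∞ :=
  sInf {j : ℕ∞ | ∃ n : ℕ, j = (n : ℕ∞) ∧ ∀ p ∈ closures k r f n, γ ≤ ∑ i, α i * p.2 i}

def IsSplitSet (S : Set Pt) : Prop :=
  ∃ (π : Fin 2 → ℤ) (π₀ : ℤ), π ≠ 0 ∧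
    S = {x : Pt | (π₀ : ℝ) ≤ ∑ j, (π j : ℝ) * x j ∧ ∑ j, (π j : ℝ) * x j ≤ (π₀ : ℝ) + 1}

/-- Triangle of type `T¹`. -/
def IsT1 (S : Set Pt) : Prop :=
  ∃ v : Fin 3 → Pt, AffineIndependent ℝ v ∧ (∀ i, IsIntPt (v i)) ∧
    S = convexHull ℝ (Set.range v) ∧
    ∀ i j, i ≠ j → ∃! z, z ∈ openSegment ℝ (v i) (v j) ∧ IsIntPt z

/-- Triangle of type `T^{2A}`. -/
def IsT2A (S : Set Pt) : Prop :=
  ∃ v0 v1 v2 : Pt, AffineIndependent ℝ ![v0, v1, v2] ∧ ¬ IsIntPt v0 ∧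
    S = convexHull ℝ {v0, v1, v2} ∧
    (∃ z1 z2 : Pt, z1 ≠ z2 ∧ IsIntPt z1 ∧ IsIntPt z2 ∧
      z1 ∈ segment ℝ v1 v2 ∧ z2 ∈ segment ℝ v1 v2) ∧
    (∃! z, z ∈ openSegment ℝ v0 v1 ∧ IsIntPt z) ∧
    (∃! z, z ∈ openSegment ℝ v0 v2 ∧ IsIntPt z)

/-- Triangle of type `T^{2B}`. -/
def IsT2B (S : Set Pt) : Prop :=
  ∃ v0 v1 v2 : Pt, AffineIndependent ℝ ![v0, v1, v2] ∧ ¬ IsIntPt v0 ∧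
    S = convexHull ℝ {v0, v1, v2} ∧
    (∃ z1 z2 : Pt, z1 ≠ z2 ∧ IsIntPt z1 ∧ IsIntPt z2 ∧
      z1 ∈ segment ℝ v1 v2 ∧ z2 ∈ segment ℝ v1 v2) ∧
    (∃! z, z ∈ openSegment ℝ v0 v1 ∧ IsIntPt z) ∧
    (∀ z ∈ openSegment ℝ v0 v2, ¬ IsIntPt z)

/-- Triangle of type `T³`. -/
def IsT3 (S : Set Pt) : Prop :=
  ∃ v0 v1 v2 : Pt, AffineIndependent ℝ ![v0, v1, v2] ∧
    ¬ IsIntPt v0 ∧ ¬ IsIntPt v1 ∧ ¬ IsIntPt v2 ∧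
    S = convexHull ℝ {v0, v1, v2} ∧
    (∃! z, z ∈ openSegment ℝ v0 v1 ∧ IsIntPt z) ∧
    (∃! z, z ∈ openSegment ℝ v1 v2 ∧ IsIntPt z) ∧
    (∃! z, z ∈ openSegment ℝ v0 v2 ∧ IsIntPt z) ∧
    (∀ z, IsIntPt z → z ∈ frontier S →
      z ∈ openSegment ℝ v0 v1 ∨ z ∈ openSegment ℝ v1 v2 ∨ z ∈ openSegment ℝ v0 v2)

/-- A quadrilateral with vertices `v 0, v 1, v 2, v 3` in cyclic order; each `vᵢ`
is an extreme point of the hull and each side lies on the boundary. -/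
def IsQuadWith (S : Set Pt) (v : Fin 4 → Pt) : Prop :=
  S = convexHull ℝ (Set.range v) ∧
  (∀ i, v i ∈ Set.extremePoints ℝ S) ∧
  (∀ i : Fin 4, segment ℝ (v i) (v (i + 1)) ⊆ frontier S)

/-- Quadrilateral of type `Q¹`. -/
def IsQ1 (S : Set Pt) : Prop :=
  ∃ v : Fin 4 → Pt, IsQuadWith S v ∧
    (∃ z1 z2 : Pt, z1 ≠ z2 ∧ IsIntPt z1 ∧ IsIntPt z2 ∧
      z1 ∈ segment ℝ (v 0) (v 1) ∧ z2 ∈ segment ℝ (v 0) (v 1)) ∧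
    (∃ j : Fin 4, j ≠ 0 ∧
      (∀ i : Fin 4, i ≠ 0 → i ≠ j → ∃ z, IsIntPt z ∧ z ∈ segment ℝ (v i) (v (i + 1))) ∧
      (∀ z ∈ openSegment ℝ (v j) (v (j + 1)), ¬ IsIntPt z)) ∧
    (∃ T : Set Pt, (IsT1 T ∨ IsT2A T) ∧ S ⊆ T)

/-- Quadrilateral of type `Q²`. -/
def IsQ2 (S : Set Pt) : Prop :=
  ∃ v : Fin 4 → Pt, IsQuadWith S v ∧ (∀ i, ¬ IsIntPt (v i)) ∧
    ∀ i : Fin 4, ∃! z, z ∈ openSegment ℝ (v i) (v (i + 1)) ∧ IsIntPt z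

/-!
Over a point of the linear relaxation where the inequality fails, read `t = 1 - ∑ i, α i * s i` as
a height: the relaxation then lies below the pyramid with apex at height `1` over `f` and base
`L_α`, and the claim is that finitely many split closures push the height down to `0`. Since `L_α`
contains no other integer points, the three on its sides span a unimodular triangle, so the
barycentric coordinates of this inner triangle are integral on `ℤ²` and integral combinations of
them define splits. The sides of `L_α` all turn in the same direction against those of the inner
triangle, which makes every two rounds of splits in the coordinate directions contract the maximal
height by a fixed factor.

This alone only gives convergence. Once the height is small, a split with one boundary line through
an integer point and almost parallel to the side of `L_α` through it, found by Dirichlet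
approximation, cuts the slopes of the height near that point to an arbitrarily small `ε`. As soon
as they drop below the fixed slopes of the pyramid, two more rounds of coordinate splits bring the
height down to `0`.
-/

theorem sum_fin_three_eq_cyclic {M : Type*} [AddCommMonoid M] (u : Fin 3 → M) (i : Fin 3) :
    ∑ j, u j = u i + u (i + 1) + u (i + 2) := by
  rw [← Equiv.sum_comp (Equiv.addLeft i), Fin.sum_univ_three]
  simp only [Equiv.coe_addLeft, add_zero]

theorem forall_fin_three_iff_cyclic {p : Fin 3 → Prop} (i : Fin 3) :
    (∀ j, p j) ↔ p i ∧ p (i + 1) ∧ p (i + 2) := by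
  rw [(Equiv.addLeft i).surjective.forall, Fin.forall_fin_succ, Fin.forall_fin_two]
  simp only [Equiv.coe_addLeft, add_zero]
  rfl

section SplitTower

variable {V : Type*} [AddCommGroup V] [Module ℝ V]

/-- An abstract sequence of split closures: `C (n + 1)` is contained in the set obtained from
`C n` by any split whose boundary lines are given by an integral combination of the coordinate
functions `x i`. -/
def IsSplitTower {ι : Type*} [Fintype ι] (C : ℕ → Set V) (x : ι → V →ᵃ[ℝ] ℝ) : Prop :=
  ∀ (n : ℕ) (π : ι → ℤ),
    C (n + 1) ⊆ convexHull ℝ {p ∈ C n | ∑ i, π i * x i p ≤ 0 ∨ 1 ≤ ∑ i, π i * x i p}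

theorem convex_setOf_affineMap_le (t g : V →ᵃ[ℝ] ℝ) : Convex ℝ {p | t p ≤ g p} := by
  have : {p | t p ≤ g p} = (g - t) ⁻¹' Ici 0 := by ext p; simp
  rw [this]
  exact (convex_Ici 0).affine_preimage _

namespace IsSplitTower

variable {ι : Type*} [Fintype ι] {C : ℕ → Set V} {x : ι → V →ᵃ[ℝ] ℝ} {t g : V →ᵃ[ℝ] ℝ} {m n : ℕ}

theorem le_of_split (hC : IsSplitTower C x) (π : ι → ℤ)
    (h : ∀ p ∈ C n, (∑ i, π i * x i p ≤ 0 ∨ 1 ≤ ∑ i, π i * x i p) → t p ≤ g p) :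
    ∀ p ∈ C (n + 1), t p ≤ g p :=
  fun _ hp => convexHull_min (fun p hp => h p hp.1 hp.2) (convex_setOf_affineMap_le t g)
    (hC n π hp)

theorem le_of_coord_split (hC : IsSplitTower C x) (i : ι)
    (h : ∀ p ∈ C n, (x i p ≤ 0 ∨ 1 ≤ x i p) → t p ≤ g p) :
    ∀ p ∈ C (n + 1), t p ≤ g p := by
  classical
  exact hC.le_of_split (Pi.single i 1) fun p hp hs => h p hp (by simpa [Pi.single_apply] using hs)

theorem le_of_le (hC : IsSplitTower C x) (hmn : m ≤ n) (h : ∀ p ∈ C m, t p ≤ g p) :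
    ∀ p ∈ C n, t p ≤ g p := by
  induction n, hmn using Nat.le_induction with
  | base => exact h
  | succ n _ ih => exact hC.le_of_split 0 fun p hp _ => ih p hp

end IsSplitTower

/-- Upper bounds on a height `t` near the three points where one of the barycentric coordinates
`x i` is `1` and the others vanish: each bound is an affine function vanishing at that point. -/
def CornerBounds (S : Set V) (t : V →ᵃ[ℝ] ℝ) (x : Fin 3 → V →ᵃ[ℝ] ℝ) (a b : Fin 3 → ℝ) : Prop :=
  ∀ i, ∀ p ∈ S, t p ≤ a i * x (i + 1) p + b i * x (i + 2) p

namespace CornerBounds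

variable {S : Set V} {t : V →ᵃ[ℝ] ℝ} {x : Fin 3 → V →ᵃ[ℝ] ℝ} {a b : Fin 3 → ℝ}

theorem next (h : CornerBounds S t x a b) (i : Fin 3) {p : V} (hp : p ∈ S) :
    t p ≤ a (i + 1) * x (i + 2) p + b (i + 1) * x i p := by
  fin_cases i <;> exact h _ p hp

theorem prev (h : CornerBounds S t x a b) (i : Fin 3) {p : V} (hp : p ∈ S) :
    t p ≤ a (i + 2) * x i p + b (i + 2) * x (i + 1) p := by
  fin_cases i <;> exact h _ p hp

theorem mono {ι : Type*} [Fintype ι] {C : ℕ → Set V} {y : ι → V →ᵃ[ℝ] ℝ}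
    (hC : IsSplitTower C y) {m n : ℕ} (hmn : m ≤ n) (h : CornerBounds (C m) t x a b) :
    CornerBounds (C n) t x a b :=
  fun i => hC.le_of_le (g := a i • x (i + 1) + b i • x (i + 2)) hmn (h i)

end CornerBounds

/-- The pyramid with apex at height `1` over a triangle of type `T³`, in the barycentric
coordinates `x i` of the triangle of the three integer points on its sides. The condition
`a i < b i` fixes the cyclic order in which these points are numbered. -/
structure IsPyramid (S : Set V) (t : V →ᵃ[ℝ] ℝ) (x : Fin 3 → V →ᵃ[ℝ] ℝ) (a b : Fin 3 → ℝ) :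
    Prop where
  sum_eq_one : ∀ p, ∑ i, x i p = 1
  bounds : CornerBounds S t x a b
  pos : ∀ i, 0 < a i
  lt : ∀ i, a i < b i

variable {C : ℕ → Set V} {t : V →ᵃ[ℝ] ℝ} {x : Fin 3 → V →ᵃ[ℝ] ℝ} {a b : Fin 3 → ℝ}

namespace IsPyramid

variable {S : Set V}

theorem sum_cyclic (hP : IsPyramid S t x a b) (i : Fin 3) (p : V) :
    x i p + x (i + 1) p + x (i + 2) p = 1 := by
  rw [← sum_fin_three_eq_cyclic fun j => x j p, hP.sum_eq_one p]

theorem mono {ι : Type*} [Fintype ι] {y : ι → V →ᵃ[ℝ] ℝ} (hC : IsSplitTower C y) {m n : ℕ}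
    (hmn : m ≤ n) (hP : IsPyramid (C m) t x a b) : IsPyramid (C n) t x a b :=
  { hP with bounds := hP.bounds.mono hC hmn }

theorem exists_slope_bounds (hP : IsPyramid S t x a b) :
    ∃ c K, 0 < c ∧ ∀ i, c ≤ a i ∧ c ≤ b i - a i ∧ b i ≤ K := by
  obtain ⟨⟨c, hc⟩, hca⟩ := Finite.exists_ge fun i =>
    (⟨min (a i) (b i - a i), lt_min (hP.pos i) (sub_pos.mpr (hP.lt i))⟩ : Ioi (0 : ℝ))
  obtain ⟨K, hK⟩ := Finite.exists_le b
  have hmin : ∀ i, c ≤ min (a i) (b i - a i) := hca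
  exact ⟨c, K, hc, fun i => ⟨(le_min_iff.mp (hmin i)).1, (le_min_iff.mp (hmin i)).2, hK i⟩⟩

theorem le_mul_coord_of_split (hP : IsPyramid S t x a b) (i : Fin 3) {p : V} (hp : p ∈ S)
    (hs : x (i + 1) p ≤ 0 ∨ 1 ≤ x (i + 1) p) :
    t p ≤ a (i + 2) * x i p ∨ t p ≤ (b (i + 1) - a (i + 1)) * x i p := by
  have hsum := hP.sum_cyclic i p
  refine hs.imp (fun hs => ?_) fun hs => ?_
  · have hb : 0 < b (i + 2) := (hP.pos _).trans (hP.lt _)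
    have := mul_nonpos_of_nonneg_of_nonpos hb.le hs
    linarith [hP.bounds.prev i hp]
  · have : a (i + 1) * x (i + 2) p ≤ a (i + 1) * -x i p :=
      mul_le_mul_of_nonneg_left (by linarith) (hP.pos _).le
    linarith [hP.bounds.next i hp]

theorem exists_le_mul_sub (hP : IsPyramid S t x a b) (i : Fin 3) :
    ∃ κ Y, 0 < κ ∧ 0 < Y ∧ ∀ p ∈ S, t p ≤ κ * (Y - x (i + 1) p) := by
  have ha := hP.pos i
  have hab := hP.lt i
  have ha' := hP.pos (i + 1)
  have hab' := sub_pos.mpr (hP.lt (i + 1))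
  have hb := ha.trans hab
  have hb' := ha'.trans (hP.lt (i + 1))
  set W := b (i + 1) - a (i + 1) + b i
  set M := b i * b (i + 1)
  set s := M - (b (i + 1) - a (i + 1)) * a i with hs
  have hW₀ : 0 < W := add_pos hab' hb
  have hs₀ : 0 < s := by
    linarith only [hs, mul_pos (sub_pos.mpr hab) hb', mul_pos ha ha']
  refine ⟨s / W, M / s, div_pos hs₀ hW₀, div_pos (mul_pos hb hb') hs₀, fun p hp => ?_⟩
  have hWt : t p * W ≤ M - s * x (i + 1) p := by
    have h₁ := mul_le_mul_of_nonneg_left (hP.bounds i p hp) hab'.le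
    have h₂ := mul_le_mul_of_nonneg_left (hP.bounds.next i hp) hb.le
    have hx : x i p = 1 - x (i + 1) p - x (i + 2) p := by linarith only [hP.sum_cyclic i p]
    rw [hx] at h₂
    linarith only [hs, h₁, h₂]
  calc t p ≤ (M - s * x (i + 1) p) / W := (le_div_iff₀ hW₀).mpr hWt
    _ = s / W * (M / s - x (i + 1) p) := by field_simp

end IsPyramid

/-- The convex combination of `t ≤ K * x` with weight `c / K` and `t ≤ h` with weight
`1 - c / K`. -/
theorem le_mul_add_of_le_of_le_mul {t h s x c K : ℝ} (hc : 0 < c) (hh : 0 ≤ h) (hcs : c ≤ s)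
    (hsK : s ≤ K) (ht : t ≤ h) (hts : t ≤ s * x) : t ≤ c * x + (1 - c / K) * h := by
  have hK : 0 < K := by linarith
  have hθ : 0 ≤ 1 - c / K := sub_nonneg.mpr ((div_le_one hK).mpr (hcs.trans hsK))
  rcases le_total x 0 with hx | hx
  · linarith [mul_le_mul_of_nonpos_right hcs hx, mul_nonneg hθ hh]
  · have htK : t ≤ K * x := hts.trans (mul_le_mul_of_nonneg_right hsK hx)
    calc t = c / K * t + (1 - c / K) * t := by ring
      _ ≤ c / K * (K * x) + (1 - c / K) * h := by gcongr
      _ = c * x + (1 - c / K) * h := by field_simp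

namespace IsSplitTower

variable {n : ℕ} {h : ℝ}

theorem le_const_of_corners (hC : IsSplitTower C x) (hsum : ∀ p, ∑ i, x i p = 1)
    (h₀ : ∀ i, ∀ p ∈ C n, x i p ≤ 0 → t p ≤ h) : ∀ p ∈ C (n + 1), t p ≤ h := by
  refine hC.le_of_coord_split (g := AffineMap.const ℝ V h) 0 fun p hp hs => ?_
  have hp1 := hsum p
  rw [Fin.sum_univ_three] at hp1
  rcases hs with hs | hs
  · exact h₀ 0 p hp hs
  · rcases le_total (x 1 p) 0 with h1 | h1
    · exact h₀ 1 p hp h1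
    · exact h₀ 2 p hp (by linarith)

theorem exists_contraction (hC : IsSplitTower C x) (hP : IsPyramid (C 0) t x a b) :
    ∃ θ, 0 ≤ θ ∧ θ < 1 ∧
      ∀ n h, 0 ≤ h → (∀ p ∈ C n, t p ≤ h) → ∀ p ∈ C (n + 2), t p ≤ θ * h := by
  obtain ⟨c, K, hc, hcK⟩ := hP.exists_slope_bounds
  have hK : 0 < K := (hP.pos 0).trans ((hP.lt 0).trans_le (hcK 0).2.2)
  have hcK' : c ≤ K := (hcK 0).1.trans ((hP.lt 0).le.trans (hcK 0).2.2)
  refine ⟨1 - c / K, sub_nonneg.mpr ((div_le_one hK).mpr hcK'), sub_lt_self 1 (div_pos hc hK),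
    fun n h hh ht => ?_⟩
  have hPn := hP.mono hC n.zero_le
  have slanted : ∀ i, ∀ p ∈ C (n + 1), t p ≤ c * x i p + (1 - c / K) * h := fun i =>
    hC.le_of_coord_split (g := c • x i + AffineMap.const ℝ V ((1 - c / K) * h)) (i + 1)
      fun p hp hs => by
        rcases hPn.le_mul_coord_of_split i hp hs with hs | hs
        · exact le_mul_add_of_le_of_le_mul hc hh (hcK _).1
            ((hP.lt _).le.trans (hcK (i + 2)).2.2) (ht p hp) hs
        · exact le_mul_add_of_le_of_le_mul hc hh (hcK _).2.1
            ((sub_le_self _ (hP.pos _).le).trans (hcK (i + 1)).2.2) (ht p hp) hs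
  refine hC.le_const_of_corners hP.sum_eq_one fun i p hp hx => ?_
  linarith [slanted i p hp, mul_nonpos_of_nonneg_of_nonpos hc.le hx]

theorem exists_height_le (hC : IsSplitTower C x) (hP : IsPyramid (C 0) t x a b)
    (h₁ : ∀ p ∈ C 0, t p ≤ 1) (hh : 0 < h) : ∃ n, ∀ p ∈ C n, t p ≤ h := by
  obtain ⟨θ, hθ₀, hθ₁, hθ⟩ := hC.exists_contraction hP
  have hpow : ∀ m, ∀ p ∈ C (2 * m), t p ≤ θ ^ m := by
    intro m
    induction m with
    | zero => simpa using h₁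
    | succ m ih =>
      rw [pow_succ']
      exact hθ _ _ (pow_nonneg hθ₀ m) ih
  obtain ⟨m, hm⟩ := exists_pow_lt_of_lt_one hh hθ₁
  exact ⟨2 * m, fun p hp => (hpow m p hp).trans hm.le⟩

end IsSplitTower

theorem exists_int_sub_nat_mul_mem_Icc (ξ : ℝ) {ε : ℝ} (hε : 0 < ε) :
    ∃ (q : ℕ) (p : ℤ), 0 < q ∧ p - q * ξ ∈ Icc 0 ε := by
  obtain ⟨n, hn⟩ := exists_nat_one_div_lt hε
  obtain ⟨q, hq, -, hp⟩ := Real.exists_nat_abs_mul_sub_round_le ξ n.succ_pos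
  set p : ℤ := round (q * ξ)
  have hnn : (1 : ℝ) ≤ n + 1 := by simp
  have hpn : |(q : ℝ) * ξ - p| ≤ 1 / ((n : ℝ) + 1) :=
    hp.trans (one_div_le_one_div_of_le (by positivity) (by simp))
  rw [abs_le] at hpn
  rcases le_or_gt ((q : ℝ) * ξ - p) 0 with h | h
  · exact ⟨q, p, hq, by linarith, by linarith⟩
  · -- Multiplying by `⌊1 / δ⌋` moves an approximation with error `-δ` just below the next integer.
    set δ := (q : ℝ) * ξ - p with hδ
    have hδ1 : δ ≤ 1 := hpn.2.trans ((div_le_one (by positivity)).mpr hnn)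
    have hfloor : 0 < ⌊1 / δ⌋₊ := Nat.floor_pos.mpr ((one_le_div h).mpr hδ1)
    have hle := (le_div_iff₀ h).mp (Nat.floor_le (one_div_pos.mpr h).le)
    have hlt := (div_lt_iff₀ h).mp (Nat.lt_floor_add_one (1 / δ))
    have herr : ((⌊1 / δ⌋₊ * p + 1 : ℤ) : ℝ) - (⌊1 / δ⌋₊ * q : ℕ) * ξ = 1 - ⌊1 / δ⌋₊ * δ := by
      push_cast
      rw [hδ]
      ring
    exact ⟨⌊1 / δ⌋₊ * q, ⌊1 / δ⌋₊ * p + 1, Nat.mul_pos hfloor hq, by linarith, by linarith⟩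

/-- The integer vector `(P, q)` is almost parallel to `(a, b)`, with scale `N` and error `δ`. -/
theorem exists_int_direction (a : ℝ) {b κ η : ℝ} (hb : 0 < b) (hκ : 0 < κ) (hη : 0 < η) :
    ∃ (P q : ℤ) (N δ : ℝ), 0 < N ∧ 0 ≤ δ ∧ δ ≤ κ ∧ δ ≤ η * N ∧ N * P = a + δ ∧ N * q = b := by
  obtain ⟨q, P, hq, h₀, hε⟩ :=
    exists_int_sub_nat_mul_mem_Icc (a / b) (ε := min η (κ / b)) (lt_min hη (div_pos hκ hb))
  have hq' : (0 : ℝ) < q := by exact_mod_cast hq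
  set θ := (P : ℝ) - q * (a / b) with hθ
  have hN : 0 < b / q := div_pos hb hq'
  refine ⟨P, q, b / q, b / q * θ, hN, mul_nonneg hN.le h₀, ?_, ?_, ?_, ?_⟩
  · calc b / q * θ ≤ b * (κ / b) :=
          mul_le_mul (div_le_self hb.le (by exact_mod_cast hq)) (hε.trans (min_le_right _ _)) h₀
            hb.le
      _ = κ := by field_simp
  · rw [mul_comm η]
    exact mul_le_mul_of_nonneg_left (hε.trans (min_le_left _ _)) hN.le
  · rw [hθ]
    field_simp
    ring
  · push_cast
    field_simp

theorem le_sub_mul_of_le_mul_sub {t η κ δ Y y : ℝ} (hδ : 0 ≤ δ) (hδκ : δ ≤ κ) (hY : 0 ≤ Y)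
    (hδY : δ * Y ≤ η / 2) (ht : t ≤ η / 2) (htκ : t ≤ κ * (Y - y)) : t ≤ η - δ * y := by
  rcases le_total y Y with hy | hy
  · linarith [mul_le_mul_of_nonneg_left hy hδ]
  · linarith [mul_le_mul_of_nonpos_right hδκ (sub_nonpos.mpr hy), mul_nonneg hδ hY]

namespace IsSplitTower

theorem le_of_int_direction_split (hC : IsSplitTower C x) {n : ℕ} (i : Fin 3) {P q : ℤ}
    {A B N δ e : ℝ} (he : 0 ≤ e) (he1 : e ≤ 1) (hN : 0 ≤ N) (hNP : N * P = A + δ)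
    (hNq : N * q = B) (hbound : ∀ p ∈ C n, t p ≤ A * x (i + 1) p + B * x (i + 2) p)
    (hlow : ∀ p ∈ C n, t p ≤ e * N - δ * x (i + 1) p) :
    ∀ p ∈ C (n + 1), t p ≤ (e * A - (1 - e) * δ) * x (i + 1) p + e * B * x (i + 2) p := by
  refine hC.le_of_split (g := (e * A - (1 - e) * δ) • x (i + 1) + (e * B) • x (i + 2))
    (Pi.single (i + 1) P + Pi.single (i + 2) q) fun p hp hs => ?_
  change t p ≤ (e * A - (1 - e) * δ) * x (i + 1) p + e * B * x (i + 2) p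
  simp only [Pi.add_apply, Int.cast_add, add_mul, Finset.sum_add_distrib, Pi.single_apply,
    Int.cast_ite, Int.cast_zero, ite_mul, zero_mul, Finset.sum_ite_eq', Finset.mem_univ,
    if_true] at hs
  set w := (P : ℝ) * x (i + 1) p + q * x (i + 2) p with hw
  have hNw : N * w = (A + δ) * x (i + 1) p + B * x (i + 2) p := by
    rw [hw, ← hNP, ← hNq]
    ring
  rcases hs with hs | hs
  · have : (1 - e) * (N * w) ≤ 0 := mul_nonpos_of_nonneg_of_nonpos (sub_nonneg.mpr he1)
      (mul_nonpos_of_nonneg_of_nonpos hN hs)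
    rw [hNw] at this
    linarith [hbound p hp]
  · have : e * N ≤ e * (N * w) := mul_le_mul_of_nonneg_left (le_mul_of_one_le_right hN hs) he
    rw [hNw] at this
    linarith [hlow p hp]

/-- A split with one boundary line through the point `x i = 1`, almost parallel to the side of the
outer triangle, flattens the height near that point: on the far side of the split the pyramid is
already low. -/
theorem exists_flat_bound (hC : IsSplitTower C x) (hP : IsPyramid (C 0) t x a b)
    (h₁ : ∀ p ∈ C 0, t p ≤ 1) {ε : ℝ} (hε : 0 < ε) (i : Fin 3) :
    ∃ a' b' n, a' ≤ ε ∧ 0 ≤ a' ∧ b' ≤ ε ∧ 0 ≤ b' ∧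
      ∀ p ∈ C n, t p ≤ a' * x (i + 1) p + b' * x (i + 2) p := by
  have ha := hP.pos i
  have hab := hP.lt i
  have hb := ha.trans hab
  obtain ⟨κ, Y, hκ, hY, htail⟩ := hP.exists_le_mul_sub i
  obtain ⟨e, he, he1, heb⟩ : ∃ e, 0 < e ∧ e < 1 ∧ e * b i ≤ ε := by
    refine ⟨ε / (b i + ε), by positivity, (div_lt_one (by positivity)).mpr (by linarith), ?_⟩
    rw [div_mul_eq_mul_div]
    exact div_le_of_le_mul₀ (by positivity) hε.le (by gcongr; linarith)
  obtain ⟨P, q, N, δ, hN, hδ, hδmin, hδN, hNP, hNq⟩ := exists_int_direction (a i) hb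
    (κ := min κ (e * a i)) (lt_min hκ (by positivity)) (η := e / (2 * Y)) (by positivity)
  have hδκ : δ ≤ κ := hδmin.trans (min_le_left _ _)
  have hδa : δ ≤ e * a i := hδmin.trans (min_le_right _ _)
  have hδY : δ * Y ≤ e * N / 2 := by
    calc δ * Y ≤ e / (2 * Y) * N * Y := by gcongr
      _ = e * N / 2 := by field_simp
  obtain ⟨n, hn⟩ := hC.exists_height_le hP h₁ (h := e * N / 2) (by positivity)
  refine ⟨e * a i - (1 - e) * δ, e * b i, n + 1, ?_, ?_, heb, by positivity,
    hC.le_of_int_direction_split i (P := P) (q := q) he.le he1.le hN.le hNP hNq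
      ((hP.mono hC n.zero_le).bounds i) fun p hp => ?_⟩
  · linarith [mul_le_mul_of_nonneg_left hab.le he.le, mul_nonneg (sub_nonneg.mpr he1.le) hδ]
  · linarith [mul_nonneg he.le hδ]
  · exact le_sub_mul_of_le_mul_sub hδ hδκ hY.le hδY (hn p hp)
      (hC.le_of_le (g := κ • (AffineMap.const ℝ V Y - x (i + 1))) n.zero_le htail p hp)

theorem le_mul_coord_of_flat (hC : IsSplitTower C x) {n : ℕ} (hP : IsPyramid (C n) t x a b)
    {ε : ℝ} {a' b' : Fin 3 → ℝ} (hεa : ∀ i, ε ≤ a i) (hεb : ∀ i, ε ≤ b i - a i)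
    (ha' : ∀ i, a' i ∈ Icc 0 ε) (hb' : ∀ i, b' i ∈ Icc 0 ε) (hflat : CornerBounds (C n) t x a' b')
    (i : Fin 3) : ∀ p ∈ C (n + 1), t p ≤ ε * x (i + 1) p := by
  refine hC.le_of_coord_split (g := ε • x (i + 1)) (i + 2) fun p hp hs => ?_
  change t p ≤ ε * x (i + 1) p
  have hsum := hP.sum_cyclic i p
  have hb : ∀ i, 0 ≤ b i := fun i => ((hP.pos i).trans (hP.lt i)).le
  rcases hs with hs | hs
  · rcases le_total (x (i + 1) p) 0 with hy | hy
    · linarith [hP.bounds i p hp, mul_le_mul_of_nonpos_right (hεa i) hy,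
        mul_nonpos_of_nonneg_of_nonpos (hb i) hs]
    · linarith [hflat i p hp, mul_le_mul_of_nonneg_right (ha' i).2 hy,
        mul_nonpos_of_nonneg_of_nonpos (hb' i).1 hs]
  · have hx : x i p ≤ -x (i + 1) p := by linarith
    rcases le_total (x (i + 1) p) 0 with hy | hy
    · linarith [hP.bounds.prev i hp, mul_le_mul_of_nonpos_right (hεb (i + 2)) hy,
        mul_le_mul_of_nonneg_left hx (hP.pos (i + 2)).le]
    · linarith [hflat.prev i hp, mul_le_mul_of_nonneg_right (hb' (i + 2)).2 hy,
        mul_le_mul_of_nonneg_left hx (ha' (i + 2)).1, mul_nonneg (ha' (i + 2)).1 hy]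

theorem exists_height_nonpos (hC : IsSplitTower C x) (hP : IsPyramid (C 0) t x a b)
    (h₁ : ∀ p ∈ C 0, t p ≤ 1) : ∃ n, ∀ p ∈ C n, t p ≤ 0 := by
  obtain ⟨ε, K, hε, hεab⟩ := hP.exists_slope_bounds
  choose a' b' N haε ha₀ hbε hb₀ hflat using hC.exists_flat_bound hP h₁ hε
  obtain ⟨n, hn⟩ := Finite.exists_le N
  have hflat_n : CornerBounds (C n) t x a' b' := fun i =>
    hC.le_of_le (g := a' i • x (i + 1) + b' i • x (i + 2)) (hn i) (hflat i)
  have hcoord := hC.le_mul_coord_of_flat (hP.mono hC n.zero_le) (fun i => (hεab i).1)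
    (fun i => (hεab i).2.1) (fun i => ⟨ha₀ i, haε i⟩) (fun i => ⟨hb₀ i, hbε i⟩) hflat_n
  refine ⟨n + 2, hC.le_const_of_corners hP.sum_eq_one fun i p hp hx => ?_⟩
  have := hcoord (i - 1) p hp
  rw [sub_add_cancel] at this
  exact this.trans (mul_nonpos_of_nonneg_of_nonpos hε.le hx)

end IsSplitTower

end SplitTower

section Triangle

theorem affineMap_map_add {𝕜 E F : Type*} [Ring 𝕜] [AddCommGroup E] [Module 𝕜 E]
    [AddCommGroup F] [Module 𝕜 F] (g : E →ᵃ[𝕜] F) (p v : E) : g (p + v) = g p + g.linear v := by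
  rw [add_comm, ← vadd_eq_add, g.map_vadd, vadd_eq_add, add_comm]

theorem affineMap_add_zsmul_sub {𝕜 E F : Type*} [Ring 𝕜] [AddCommGroup E] [Module 𝕜 E]
    [AddCommGroup F] [Module 𝕜 F] (g : E →ᵃ[𝕜] F) (p q s : E) (m : ℤ) :
    g (p + m • (q - s)) = g p + m • (g q - g s) := by
  rw [affineMap_map_add, map_zsmul, ← vsub_eq_sub, g.linearMap_vsub, vsub_eq_sub]

theorem affineMap_add_sub {𝕜 E F : Type*} [Ring 𝕜] [AddCommGroup E] [Module 𝕜 E]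
    [AddCommGroup F] [Module 𝕜 F] (g : E →ᵃ[𝕜] F) (p q s : E) :
    g (p + (q - s)) = g p + (g q - g s) := by
  simpa only [one_zsmul] using affineMap_add_zsmul_sub g p q s 1

theorem affineMap_apply_eq_sum_coord {𝕜 ι E F : Type*} [Ring 𝕜] [Fintype ι] [AddCommGroup E]
    [Module 𝕜 E] [AddCommGroup F] [Module 𝕜 F] (c : AffineBasis ι 𝕜 E) (g : E →ᵃ[𝕜] F) (x : E) :
    g x = ∑ i, c.coord i x • g (c i) := by
  have hsum := c.sum_coord_apply_eq_one x
  conv_lhs => rw [← c.affineCombination_coord_eq_self x, Finset.map_affineCombination _ _ _ hsum,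
    Finset.affineCombination_eq_linear_combination _ _ _ hsum]
  rfl

variable {E : Type*} [AddCommGroup E] [Module ℝ E] {Λ : AddSubgroup E}
  {b c : AffineBasis (Fin 3) ℝ E}

theorem coord_mem_range_intCast {ι : Type*} {c : AffineBasis ι ℝ E} {x : E}
    (hx : x ∈ range c) (i : ι) : c.coord i x ∈ (Int.castAddHom ℝ).range := by
  classical
  obtain ⟨j, rfl⟩ := hx
  rw [c.coord_apply]
  split_ifs
  exacts [⟨1, by simp⟩, zero_mem _]

/-- The parallelogram with sides `c 1 - c 0` and `c 2 - c 0` is the union of the triangle `c` and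
of its reflection in the midpoint of `c 1` and `c 2`. -/
theorem coord_mem_range_intCast_of_mem_Icc (hc : ∀ i, c i ∈ Λ)
    (hempty : ∀ x ∈ Λ, x ∈ convexHull ℝ (range c) → x ∈ range c) {x : E} (hx : x ∈ Λ)
    (h₁ : c.coord 1 x ∈ Icc 0 1) (h₂ : c.coord 2 x ∈ Icc 0 1) (i : Fin 3) :
    c.coord i x ∈ (Int.castAddHom ℝ).range := by
  simp only [c.convexHull_eq_nonneg_coord] at hempty
  rcases le_total 0 (c.coord 0 x) with h₀ | h₀
  · exact coord_mem_range_intCast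
      (hempty x hx ((forall_fin_three_iff_cyclic 0).mpr ⟨h₀, h₁.1, h₂.1⟩)) i
  · have hrefl : ∀ i, c.coord i (c 1 + (c 2 - x)) =
        c.coord i (c 1) + (c.coord i (c 2) - c.coord i x) := fun i =>
      affineMap_add_sub (c.coord i) _ _ _
    have hmem : c 1 + (c 2 - x) ∈ range c := by
      refine hempty _ (add_mem (hc 1) (sub_mem (hc 2) hx)) ?_
      exact (forall_fin_three_iff_cyclic 0).mpr ⟨by simpa [hrefl, c.coord_apply] using h₀,
        by simpa [hrefl, c.coord_apply] using h₁.2, by simpa [hrefl, c.coord_apply] using h₂.2⟩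
    have h := hrefl i ▸ coord_mem_range_intCast hmem i
    have hv : ∀ j, c.coord i (c j) ∈ (Int.castAddHom ℝ).range := fun j =>
      coord_mem_range_intCast ⟨j, rfl⟩ i
    rw [add_mem_cancel_left (hv 1)] at h
    simpa using sub_mem (hv 2) h

theorem coord_mem_range_intCast_of_mem (hc : ∀ i, c i ∈ Λ)
    (hempty : ∀ x ∈ Λ, x ∈ convexHull ℝ (range c) → x ∈ range c) {x : E} (hx : x ∈ Λ)
    (i : Fin 3) : c.coord i x ∈ (Int.castAddHom ℝ).range := by
  set m := ⌊c.coord 1 x⌋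
  set n := ⌊c.coord 2 x⌋
  set w := x + -m • (c 1 - c 0) + -n • (c 2 - c 0) with hw
  have hwΛ : w ∈ Λ := add_mem (add_mem hx (zsmul_mem (sub_mem (hc 1) (hc 0)) _))
    (zsmul_mem (sub_mem (hc 2) (hc 0)) _)
  have hcoord : ∀ i, c.coord i w = c.coord i x + -m • (c.coord i (c 1) - c.coord i (c 0)) +
      -n • (c.coord i (c 2) - c.coord i (c 0)) := fun i => by
    rw [hw, affineMap_add_zsmul_sub, affineMap_add_zsmul_sub]
  have h₁ : c.coord 1 w = Int.fract (c.coord 1 x) := by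
    rw [hcoord, ← Int.self_sub_floor]
    simp [c.coord_apply, m, sub_eq_add_neg]
  have h₂ : c.coord 2 w = Int.fract (c.coord 2 x) := by
    rw [hcoord, ← Int.self_sub_floor]
    simp [c.coord_apply, n, sub_eq_add_neg]
  have hfract : ∀ a : ℝ, Int.fract a ∈ Icc (0 : ℝ) 1 := fun a =>
    ⟨Int.fract_nonneg a, (Int.fract_lt_one a).le⟩
  have hv : ∀ j l, c.coord i (c j) - c.coord i (c l) ∈ (Int.castAddHom ℝ).range := fun j l =>
    sub_mem (coord_mem_range_intCast ⟨j, rfl⟩ i) (coord_mem_range_intCast ⟨l, rfl⟩ i)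
  have hwi := coord_mem_range_intCast_of_mem_Icc hc hempty hwΛ (h₁ ▸ hfract _) (h₂ ▸ hfract _) i
  rwa [hcoord, add_mem_cancel_right (zsmul_mem (hv 2 0) _),
    add_mem_cancel_right (zsmul_mem (hv 1 0) _)] at hwi

/-- A triangle with vertices `b i` which, like those of type `T³`, contains exactly three points of
the lattice `Λ`: one point `c i` in the relative interior of the side opposite to each `b i`. -/
structure IsT3Triangle (Λ : AddSubgroup E) (b c : AffineBasis (Fin 3) ℝ E) : Prop where
  coord_self : ∀ i, b.coord i (c i) = 0
  coord_pos : ∀ i j, i ≠ j → 0 < b.coord i (c j)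
  mem : ∀ i, c i ∈ Λ
  mem_range : ∀ x ∈ Λ, x ∈ convexHull ℝ (range b) → x ∈ range c

namespace IsT3Triangle

theorem coord_nonneg (h : IsT3Triangle Λ b c) (i j : Fin 3) : 0 ≤ b.coord i (c j) := by
  rcases eq_or_ne i j with rfl | hij
  exacts [(h.coord_self i).ge, (h.coord_pos i j hij).le]

theorem convexHull_subset (h : IsT3Triangle Λ b c) :
    convexHull ℝ (range c) ⊆ convexHull ℝ (range b) := by
  refine convexHull_min ?_ (convex_convexHull ℝ _)
  rintro _ ⟨j, rfl⟩
  rw [b.convexHull_eq_nonneg_coord]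
  exact fun i => h.coord_nonneg i j

theorem coord_mem_range_intCast (h : IsT3Triangle Λ b c) (i : Fin 3) {x : E} (hx : x ∈ Λ) :
    c.coord i x ∈ (Int.castAddHom ℝ).range :=
  coord_mem_range_intCast_of_mem h.mem (fun y hy hyc => h.mem_range y hy (h.convexHull_subset hyc))
    hx i

theorem coord_eq_add (h : IsT3Triangle Λ b c) (i : Fin 3) (x : E) :
    b.coord i x = b.coord i (c (i + 1)) * c.coord (i + 1) x +
      b.coord i (c (i + 2)) * c.coord (i + 2) x := by
  rw [affineMap_apply_eq_sum_coord c, sum_fin_three_eq_cyclic _ i, h.coord_self]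
  simp only [smul_eq_mul]
  ring

/-- Otherwise the fourth vertex `c i + (c (i + 1) - c (i + 2))` of a lattice parallelogram would lie
in the triangle `b`. -/
theorem coord_lt_or_coord_lt (h : IsT3Triangle Λ b c) (i : Fin 3) :
    b.coord i (c (i + 1)) < b.coord i (c (i + 2)) ∨
      b.coord (i + 1) (c i) < b.coord (i + 1) (c (i + 2)) := by
  by_contra! hle
  have hne : i ≠ i + 1 ∧ i ≠ i + 2 ∧ i + 1 ≠ i + 2 := by
    clear hle
    decide +revert
  set y := c i + (c (i + 1) - c (i + 2))
  have hy : ∀ j, b.coord j y =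
      b.coord j (c i) + (b.coord j (c (i + 1)) - b.coord j (c (i + 2))) := fun j =>
    affineMap_add_sub (b.coord j) _ _ _
  have hyb : y ∈ convexHull ℝ (range b) := by
    rw [b.convexHull_eq_nonneg_coord]
    refine (forall_fin_three_iff_cyclic i).mpr ?_
    simp only [hy, h.coord_self]
    have := h.coord_nonneg (i + 2) i
    have := h.coord_nonneg (i + 2) (i + 1)
    exact ⟨by linarith, by linarith, by linarith⟩
  obtain ⟨j, hj⟩ := h.mem_range y (add_mem (h.mem i) (sub_mem (h.mem _) (h.mem _))) hyb
  have hcoord : c.coord (i + 2) y = -1 := by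
    rw [affineMap_add_sub, c.coord_apply_ne hne.2.1.symm, c.coord_apply_ne hne.2.2.symm,
      c.coord_apply_eq]
    norm_num
  rw [← hj, c.coord_apply] at hcoord
  split_ifs at hcoord <;> linarith

theorem reindex (h : IsT3Triangle Λ b c) (e : Fin 3 ≃ Fin 3) :
    IsT3Triangle Λ (b.reindex e) (c.reindex e) where
  coord_self i := by simpa using h.coord_self (e.symm i)
  coord_pos i j hij := by simpa using h.coord_pos _ _ (e.symm.injective.ne hij)
  mem i := by simpa using h.mem (e.symm i)
  mem_range := by simpa [AffineBasis.coe_reindex, e.symm.surjective.range_comp] using h.mem_range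

theorem exists_oriented (h : IsT3Triangle Λ b c) :
    ∃ b' c' : AffineBasis (Fin 3) ℝ E, range b' = range b ∧ IsT3Triangle Λ b' c' ∧
      ∀ i, b'.coord i (c' (i + 1)) < b'.coord i (c' (i + 2)) := by
  have h₀ : b.coord 0 (c 1) < b.coord 0 (c 2) ∨ b.coord 1 (c 0) < b.coord 1 (c 2) :=
    h.coord_lt_or_coord_lt 0
  have h₁ : b.coord 1 (c 2) < b.coord 1 (c 0) ∨ b.coord 2 (c 1) < b.coord 2 (c 0) :=
    h.coord_lt_or_coord_lt 1
  have h₂ : b.coord 2 (c 0) < b.coord 2 (c 1) ∨ b.coord 0 (c 2) < b.coord 0 (c 1) :=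
    h.coord_lt_or_coord_lt 2
  rcases lt_or_ge (b.coord 0 (c 1)) (b.coord 0 (c 2)) with hlt | hle
  · have hlt₂ := h₂.resolve_right hlt.not_gt
    have hlt₁ := h₁.resolve_right hlt₂.not_gt
    exact ⟨b, c, rfl, h, (forall_fin_three_iff_cyclic 0).mpr ⟨hlt, hlt₁, hlt₂⟩⟩
  · have hlt₁ := h₀.resolve_left hle.not_gt
    have hlt₂ := h₁.resolve_left hlt₁.not_gt
    have hlt₀ := h₂.resolve_left hlt₂.not_gt
    refine ⟨b.reindex (Equiv.neg _), c.reindex (Equiv.neg _), ?_, h.reindex _,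
      (forall_fin_three_iff_cyclic 0).mpr ⟨?_, ?_, ?_⟩⟩
    · rw [AffineBasis.coe_reindex, (Equiv.surjective _).range_comp]
    all_goals simp only [AffineBasis.coord_reindex, AffineBasis.reindex_apply, Equiv.neg_symm]
    exacts [hlt₀, hlt₂, hlt₁]

end IsT3Triangle

end Triangle

section IntegerLattice

/-- The integer points as a subgroup. -/
def intLattice : AddSubgroup Pt := AddSubgroup.pi univ fun _ => (Int.castAddHom ℝ).range

theorem mem_intLattice {x : Pt} : x ∈ intLattice ↔ IsIntPt x := by
  simp only [intLattice, AddSubgroup.mem_pi, mem_univ, true_imp_iff, AddMonoidHom.mem_range,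
    Int.coe_castAddHom, IsIntPt, eq_comm]

theorem exists_int_coeffs (g : Pt →ᵃ[ℝ] ℝ)
    (hg : ∀ x ∈ intLattice, g x ∈ (Int.castAddHom ℝ).range) :
    ∃ (π : Fin 2 → ℤ) (m : ℤ), ∀ x, g x = ∑ j, (π j : ℝ) * x j + m := by
  have hlin : ∀ x, g x = g.linear x + g 0 := fun x => congrFun g.decomp x
  have hbasis : ∀ j, (Pi.single j 1 : Pt) ∈ intLattice := fun j =>
    mem_intLattice.mpr fun l => ⟨Pi.single (M := fun _ => ℤ) j 1 l, by
      rw [Pi.single_apply, Pi.single_apply]; split_ifs <;> simp⟩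
  have hπ : ∀ j, g.linear (Pi.single j 1) ∈ (Int.castAddHom ℝ).range := fun j => by
    rw [eq_sub_of_add_eq (hlin _).symm]
    exact sub_mem (hg _ (hbasis j)) (hg 0 (zero_mem _))
  choose π hπ using hπ
  obtain ⟨m, hm⟩ := hg 0 (zero_mem _)
  refine ⟨π, m, fun x => ?_⟩
  rw [hlin, ← hm, Int.coe_castAddHom, add_left_inj]
  conv_lhs => rw [pi_eq_sum_univ' x, map_sum]
  refine Finset.sum_congr rfl fun j _ => ?_
  rw [map_smul, ← hπ, smul_eq_mul, mul_comm, Int.coe_castAddHom]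

theorem isSplitTower_closures {ι : Type*} [Fintype ι] (k : ℕ) (r : Fin k → Pt) (f : Pt)
    (u : ι → Pt →ᵃ[ℝ] ℝ) (hu : ∀ i, ∀ x ∈ intLattice, u i x ∈ (Int.castAddHom ℝ).range) :
    IsSplitTower (closures k r f) fun i => (u i).comp AffineMap.fst := by
  intro n π p hp
  choose ϖ m hϖ using fun i => exists_int_coeffs (u i) (hu i)
  have hsplit : ∀ x, ∑ i, π i * u i x =
      ∑ j, ((∑ i, π i * ϖ i j : ℤ) : ℝ) * x j + (∑ i, π i * m i : ℤ) := fun x => by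
    simp only [hϖ, mul_add, Finset.sum_add_distrib, Finset.mul_sum, ← mul_assoc]
    rw [Finset.sum_comm]
    simp only [← Finset.sum_mul]
    push_cast
    rfl
  refine convexHull_mono ?_ (mem_iInter₂.mp hp (fun j => ∑ i, π i * ϖ i j) (-∑ i, π i * m i))
  rintro q (⟨hq, hs⟩ | ⟨hq, hs⟩)
  all_goals
    refine ⟨hq, ?_⟩
    simp only [mem_ofPred_eq, Int.cast_neg] at hs
    simp only [AffineMap.comp_apply, AffineMap.coe_fst, hsplit]
  · left; linarith
  · right; linarith

end IntegerLattice

section T3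

theorem coord_eq_zero_of_mem_openSegment {ι E : Type*} [AddCommGroup E] [Module ℝ E]
    (b : AffineBasis ι ℝ E) {i j l : ι} (hij : i ≠ j) (hil : i ≠ l) {x : E}
    (hx : x ∈ openSegment ℝ (b j) (b l)) : b.coord i x = 0 := by
  obtain ⟨s, t, -, -, hst, rfl⟩ := hx
  rw [Convex.combo_affine_apply hst, b.coord_apply_ne hij, b.coord_apply_ne hil]
  simp

theorem coord_pos_of_mem_openSegment {ι E : Type*} [AddCommGroup E] [Module ℝ E]
    (b : AffineBasis ι ℝ E) {i j : ι} (hij : i ≠ j) {x : E}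
    (hx : x ∈ openSegment ℝ (b i) (b j)) : 0 < b.coord i x := by
  obtain ⟨s, t, hs, -, hst, rfl⟩ := hx
  rw [Convex.combo_affine_apply hst, b.coord_apply_eq, b.coord_apply_ne hij]
  simpa using hs

theorem isUnit_of_diag_eq_zero_of_offDiag_pos {A : Matrix (Fin 3) (Fin 3) ℝ}
    (hdiag : ∀ i, A i i = 0) (hpos : ∀ i j, i ≠ j → 0 < A i j) : IsUnit A := by
  rw [Matrix.isUnit_iff_isUnit_det, isUnit_iff_ne_zero, Matrix.det_fin_three]
  simp only [hdiag, zero_mul, mul_zero, sub_zero, zero_add]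
  have h₁ := mul_pos (mul_pos (hpos 0 1 (by decide)) (hpos 1 2 (by decide))) (hpos 2 0 (by decide))
  have h₂ := mul_pos (mul_pos (hpos 0 2 (by decide)) (hpos 1 0 (by decide))) (hpos 2 1 (by decide))
  linarith

theorem exists_isT3Triangle_of_mem_openSegment {E : Type*} [AddCommGroup E] [Module ℝ E]
    {Λ : AddSubgroup E} (b : AffineBasis (Fin 3) ℝ E) {y : Fin 3 → E}
    (hy : ∀ i, y i ∈ openSegment ℝ (b (i + 1)) (b (i + 2))) (hyΛ : ∀ i, y i ∈ Λ)
    (hmem : ∀ x ∈ Λ, x ∈ convexHull ℝ (range b) → x ∈ range y) :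
    ∃ c, IsT3Triangle Λ b c := by
  have hself : ∀ i, b.coord i (y i) = 0 := fun i =>
    coord_eq_zero_of_mem_openSegment b (by decide +revert) (by decide +revert) (hy i)
  have hpos : ∀ i j, i ≠ j → 0 < b.coord i (y j) := fun i j hij => by
    have hne : j + 1 ≠ j + 2 := by decide +revert
    obtain rfl | rfl : i = j + 1 ∨ i = j + 2 := by decide +revert
    · exact coord_pos_of_mem_openSegment b hne (hy j)
    · exact coord_pos_of_mem_openSegment b hne.symm (openSegment_symm ℝ (b (j + 1)) _ ▸ hy j)
  obtain ⟨hind, htop⟩ := (b.isUnit_toMatrix_iff y).mp <|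
    isUnit_of_diag_eq_zero_of_offDiag_pos hself fun i j hij => hpos j i hij.symm
  exact ⟨⟨y, hind, htop⟩, hself, hpos, hyΛ, hmem⟩

theorem IsT3.exists_isT3Triangle {S : Set Pt} (hS : IsT3 S) (hfree : LatticeFree S) :
    ∃ b c : AffineBasis (Fin 3) ℝ Pt, S = convexHull ℝ (range b) ∧ IsT3Triangle intLattice b c := by
  obtain ⟨v0, v1, v2, hind, -, -, -, rfl, ⟨y2, ⟨h2, i2⟩, u2⟩, ⟨y0, ⟨h0, i0⟩, u0⟩,
    ⟨y1, ⟨h1, i1⟩, u1⟩, hfr⟩ := hS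
  have htop : affineSpan ℝ (range ![v0, v1, v2]) = ⊤ := by
    rw [hind.affineSpan_eq_top_iff_card_eq_finrank_add_one]; simp
  let b : AffineBasis (Fin 3) ℝ Pt := ⟨![v0, v1, v2], hind, htop⟩
  have hrange : {v0, v1, v2} = range b := by
    change _ = range ![v0, v1, v2]
    simp only [Matrix.range_cons, Matrix.range_empty, union_empty, singleton_union]
  have hy : ∀ i, ![y0, y1, y2] i ∈ openSegment ℝ (b (i + 1)) (b (i + 2)) :=
    (forall_fin_three_iff_cyclic 0).mpr ⟨h0, openSegment_symm ℝ v0 v2 ▸ h1, h2⟩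
  have hyint : ∀ i, IsIntPt (![y0, y1, y2] i) :=
    (forall_fin_three_iff_cyclic 0).mpr ⟨i0, i1, i2⟩
  rw [hrange] at hfr hfree ⊢
  obtain ⟨c, hc⟩ := exists_isT3Triangle_of_mem_openSegment (Λ := intLattice) b hy
    (fun i => mem_intLattice.mpr (hyint i)) fun x hx hxb => by
      rw [mem_intLattice] at hx
      rcases hfr x hx ⟨subset_closure hxb, fun h => hfree x h hx⟩ with h | h | h
      exacts [⟨2, (u2 x ⟨h, hx⟩).symm⟩, ⟨0, (u0 x ⟨h, hx⟩).symm⟩, ⟨1, (u1 x ⟨h, hx⟩).symm⟩]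
  exact ⟨b, c, rfl, hc⟩

end T3

section InducedSet

variable {k : ℕ} {r : Fin k → Pt} {f : Pt} {α : Fin k → ℝ}

/-- The nonnegative vectors `s` with `∑ i, α i * s i ≤ γ`. -/
def boundedWeights (α : Fin k → ℝ) (γ : ℝ) : Set (Fin k → ℝ) :=
  {s | 0 ≤ s ∧ α ⬝ᵥ s ≤ γ}

theorem convex_boundedWeights (α : Fin k → ℝ) (γ : ℝ) : Convex ℝ (boundedWeights α γ) :=
  (convex_Ici (0 : Fin k → ℝ)).inter
    (convex_halfSpace_le ⟨dotProduct_add α, fun c s => dotProduct_smul c α s⟩ γ)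

theorem add_mem_boundedWeights {γ δ : ℝ} {s s' : Fin k → ℝ} (hs : s ∈ boundedWeights α γ)
    (hs' : s' ∈ boundedWeights α δ) : s + s' ∈ boundedWeights α (γ + δ) :=
  ⟨add_nonneg hs.1 hs'.1, by
    rw [dotProduct_add]
    exact add_le_add hs.2 hs'.2⟩

theorem smul_mem_boundedWeights {γ c : ℝ} {s : Fin k → ℝ} (hc : 0 ≤ c)
    (hs : s ∈ boundedWeights α γ) : c • s ∈ boundedWeights α (c * γ) :=
  ⟨smul_nonneg hc hs.1, by
    rw [dotProduct_smul]
    exact mul_le_mul_of_nonneg_left hs.2 hc⟩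

theorem zero_mem_boundedWeights {γ : ℝ} (hγ : 0 ≤ γ) : 0 ∈ boundedWeights α γ :=
  ⟨le_rfl, by rwa [dotProduct_zero]⟩

theorem single_mem_boundedWeights (i : Fin k) {c : ℝ} (hc : 0 ≤ c) :
    Pi.single i c ∈ boundedWeights α (α i * c) :=
  ⟨Pi.single_nonneg.mpr hc, (dotProduct_single _ _ _).le⟩

theorem coneGen_subset_image_boundedWeights :
    coneGen {x | ∃ i, α i = 0 ∧ x = r i} ⊆
      Fintype.linearCombination ℝ r '' boundedWeights α 0 := by
  rintro _ ⟨n, c, v, hc, hv, rfl⟩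
  refine Finset.sum_induction _ (· ∈ Fintype.linearCombination ℝ r '' boundedWeights α 0) ?_
    ⟨0, zero_mem_boundedWeights le_rfl, map_zero _⟩ fun j _ => ?_
  · rintro _ _ ⟨s, hs, rfl⟩ ⟨s', hs', rfl⟩
    exact ⟨s + s', by simpa using add_mem_boundedWeights hs hs', map_add _ _ _⟩
  · obtain ⟨i, hi, hvi⟩ := hv j
    refine ⟨Pi.single i (c j), by simpa [hi] using single_mem_boundedWeights (α := α) i (hc j), ?_⟩
    rw [Fintype.linearCombination_apply_single, hvi]

theorem exists_boundedWeights_of_mem_inducedSet {x : Pt} (hx : x ∈ inducedSet k r f α) :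
    ∃ s ∈ boundedWeights α 1, x = f + Fintype.linearCombination ℝ r s := by
  obtain ⟨u, hu, w, hw, rfl⟩ := hx
  obtain ⟨s', hs', rfl⟩ := coneGen_subset_image_boundedWeights hw
  have hull : u ∈ {f} + Fintype.linearCombination ℝ r '' boundedWeights α 1 := by
    refine convexHull_min ?_ ((convex_singleton f).add
      ((convex_boundedWeights α 1).linear_image _)) hu
    rintro _ (rfl | ⟨i, hi, rfl⟩)
    · exact ⟨_, rfl, 0, ⟨0, zero_mem_boundedWeights zero_le_one, map_zero _⟩, add_zero _⟩
    · refine ⟨f, rfl, _, ⟨Pi.single i (α i)⁻¹, ?_, rfl⟩, by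
        simp only [Fintype.linearCombination_apply_single]⟩
      simpa [hi.ne'] using single_mem_boundedWeights (α := α) i (inv_nonneg.mpr hi.le)
  obtain ⟨_, rfl, _, ⟨s, hs, rfl⟩, rfl⟩ := hull
  exact ⟨s + s', by simpa using add_mem_boundedWeights hs hs', by
    rw [map_add]
    exact add_assoc _ _ _⟩

/-- An integer point in the interior could be pushed away from `f` inside the set, and so would
violate the inequality. -/
theorem latticeFree_inducedSet (hvalid : ValidIneq k r f α 1) :
    LatticeFree (inducedSet k r f α) := by
  intro x hx hxint
  obtain ⟨δ, hδ, hδ1⟩ := ((eventually_homothety_mem_of_mem_interior ℝ f hx).filter_mono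
    nhdsWithin_le_nhds |>.and (self_mem_nhdsWithin (s := Ioi (1 : ℝ)))).exists
  have hδ0 : 0 < δ := zero_lt_one.trans hδ1
  obtain ⟨s, hs, hxs⟩ := exists_boundedWeights_of_mem_inducedSet hδ
  have hx' : x = f + Fintype.linearCombination ℝ r (δ⁻¹ • s) := by
    rw [AffineMap.homothety_apply, vsub_eq_sub, vadd_eq_add, add_comm, add_right_inj] at hxs
    rw [map_smul, ← hxs, inv_smul_smul₀ hδ0.ne', add_sub_cancel]
  obtain ⟨hnonneg, hle⟩ := smul_mem_boundedWeights (inv_nonneg.mpr hδ0.le) hs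
  have hge : 1 ≤ α ⬝ᵥ (δ⁻¹ • s) := hvalid (x, δ⁻¹ • s) ⟨hxint, hnonneg, hx'⟩
  rw [mul_one] at hle
  exact (hge.trans hle).not_gt (inv_lt_one_of_one_lt₀ hδ1)

theorem add_inv_smul_mem_inducedSet {i : Fin k} (hi : 0 < α i) :
    f + (α i)⁻¹ • r i ∈ inducedSet k r f α :=
  ⟨_, subset_convexHull ℝ _ (Or.inr ⟨i, hi, rfl⟩), 0, ⟨0, Fin.elim0, Fin.elim0, by simp⟩,
    add_zero _⟩

theorem add_smul_mem_inducedSet {i : Fin k} (hi : α i = 0) {s : ℝ} (hs : 0 ≤ s) :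
    f + s • r i ∈ inducedSet k r f α :=
  ⟨f, subset_convexHull ℝ _ (Or.inl rfl), s • r i,
    ⟨1, fun _ => s, fun _ => r i, fun _ => hs, fun _ => ⟨i, hi, rfl⟩, by simp⟩, rfl⟩

theorem nonneg_of_forall_nonneg_add_mul {A B : ℝ} (h : ∀ c, 0 ≤ c → 0 ≤ A + c * B) : 0 ≤ B := by
  by_contra! hB
  have := h ((|A| + 1) / -B) (div_nonneg (by positivity) (by linarith))
  rw [div_neg, neg_mul, div_mul_cancel₀ _ hB.ne] at this
  linarith [le_abs_self A]

theorem neg_mul_le_linear_of_nonneg_on_inducedSet {g : Pt →ᵃ[ℝ] ℝ}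
    (hg : ∀ x ∈ inducedSet k r f α, 0 ≤ g x) {i : Fin k} (hi : 0 ≤ α i) :
    -(α i * g f) ≤ g.linear (r i) := by
  have hadd : ∀ s : ℝ, g (f + s • r i) = g f + s * g.linear (r i) := fun s => by
    rw [affineMap_map_add, map_smul, smul_eq_mul]
  rcases hi.eq_or_lt with hi | hi
  · rw [← hi, zero_mul, neg_zero]
    exact nonneg_of_forall_nonneg_add_mul fun s hs =>
      hadd s ▸ hg _ (add_smul_mem_inducedSet hi.symm hs)
  · have := hadd _ ▸ hg _ (add_inv_smul_mem_inducedSet hi)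
    rw [← div_eq_inv_mul, ← sub_le_iff_le_add', zero_sub, le_div_iff₀ hi] at this
    linarith

/-- The height over a point of the linear relaxation at which the inequality is violated: the
inequality `∑ i, α i * s i ≥ 1` says that it is nonpositive. -/
def height (α : Fin k → ℝ) : (Pt × (Fin k → ℝ)) →ᵃ[ℝ] ℝ :=
  AffineMap.const ℝ _ 1 - (dotProductBilin ℝ ℝ α ∘ₗ LinearMap.snd ℝ Pt (Fin k → ℝ)).toAffineMap

theorem height_apply (α : Fin k → ℝ) (p : Pt × (Fin k → ℝ)) :
    height α p = 1 - ∑ i, α i * p.2 i :=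
  rfl

theorem height_le_one (hα : ∀ i, 0 ≤ α i) {p : Pt × (Fin k → ℝ)} (hp : p ∈ relaxP k r f) :
    height α p ≤ 1 :=
  (height_apply α p).trans_le <| sub_le_self 1 <|
    Finset.sum_nonneg fun i _ => mul_nonneg (hα i) (hp.1 i)

theorem height_mul_le_of_nonneg_on_inducedSet (hα : ∀ i, 0 ≤ α i) {g : Pt →ᵃ[ℝ] ℝ}
    (hg : ∀ x ∈ inducedSet k r f α, 0 ≤ g x) {p : Pt × (Fin k → ℝ)} (hp : p ∈ relaxP k r f) :
    height α p * g f ≤ g p.1 := by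
  obtain ⟨hs, hx⟩ := hp
  have hsum : ∑ i, p.2 i * -(α i * g f) ≤ ∑ i, p.2 i * g.linear (r i) :=
    Finset.sum_le_sum fun i _ => mul_le_mul_of_nonneg_left
      (neg_mul_le_linear_of_nonneg_on_inducedSet hg (hα i)) (hs i)
  calc height α p * g f = ∑ i, p.2 i * -(α i * g f) + g f := by
        rw [height_apply, sub_mul, one_mul, Finset.sum_mul, sub_eq_neg_add,
          ← Finset.sum_neg_distrib]
        congr! 2
        ring
    _ ≤ ∑ i, p.2 i * g.linear (r i) + g f := by gcongr
    _ = g p.1 := by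
        rw [hx, affineMap_map_add, map_sum, add_comm]
        simp only [map_smul, smul_eq_mul]

end InducedSet

section SplitRank

variable {k : ℕ} {r : Fin k → Pt} {f : Pt} {α : Fin k → ℝ} {b c : AffineBasis (Fin 3) ℝ Pt}

theorem IsT3Triangle.isPyramid_relaxP {Λ : AddSubgroup Pt} (h : IsT3Triangle Λ b c)
    (horient : ∀ i, b.coord i (c (i + 1)) < b.coord i (c (i + 2))) (hα : ∀ i, 0 ≤ α i)
    (hL : inducedSet k r f α = convexHull ℝ (range b)) (hf : f ∈ interior (inducedSet k r f α)) :
    IsPyramid (relaxP k r f) (height α) (fun i => (c.coord i).comp AffineMap.fst)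
      (fun i => b.coord i (c (i + 1)) / b.coord i f)
      fun i => b.coord i (c (i + 2)) / b.coord i f := by
  rw [hL, b.interior_convexHull] at hf
  refine ⟨fun p => c.sum_coord_apply_eq_one p.1, fun i p hp => ?_,
    fun i => div_pos (h.coord_pos _ _ (by decide +revert)) (hf i),
    fun i => div_lt_div_of_pos_right (horient i) (hf i)⟩
  have hle := height_mul_le_of_nonneg_on_inducedSet hα (g := b.coord i) (fun x hx => by
    rw [hL, b.convexHull_eq_nonneg_coord] at hx
    exact hx i) hp
  rw [← le_div_iff₀ (hf i), h.coord_eq_add] at hle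
  exact hle.trans_eq (by simp only [AffineMap.comp_apply, AffineMap.coe_fst]; ring)

theorem splitRank_ne_top {γ : ℝ} {n : ℕ}
    (h : ∀ p ∈ closures k r f n, γ ≤ ∑ i, α i * p.2 i) : splitRank k r f α γ ≠ ⊤ :=
  ne_top_of_le_ne_top (ENat.natCast_ne_top n) (sInf_le ⟨n, rfl, h⟩)

end SplitRank

theorem t3_finite_split_rank_general (k : ℕ) (r : Fin k → Pt) (f : Pt) (α : Fin k → ℝ)
    (hα : ∀ i, 0 ≤ α i) (hvalid : ValidIneq k r f α 1) (hshape : IsT3 (inducedSet k r f α))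
    (hfint : f ∈ interior (inducedSet k r f α)) : splitRank k r f α 1 ≠ ⊤ := by
  obtain ⟨b₀, c₀, hL, htri₀⟩ := hshape.exists_isT3Triangle (latticeFree_inducedSet hvalid)
  obtain ⟨b, c, hrange, htri, horient⟩ := htri₀.exists_oriented
  rw [← hrange] at hL
  have htower := isSplitTower_closures k r f c.coord fun i _ => htri.coord_mem_range_intCast i
  obtain ⟨n, hn⟩ := htower.exists_height_nonpos
    (htri.isPyramid_relaxP horient hα hL hfint) fun p hp => height_le_one hα hp
  exact splitRank_ne_top fun p hp => sub_nonpos.mp (hn p hp)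

theorem t3_finite_split_rank (k : ℕ)
    (hk : 1 ≤ k)
    (r : Fin k → Pt) (f : Pt)
    (hr_rat : ∀ i, IsRatPt (r i)) (hr_ne : ∀ i, r i ≠ 0)
    (hf_rat : IsRatPt f) (hf_int : ¬ IsIntPt f)
    (hne : (mixedP k r f).Nonempty)
    (α : Fin k → ℝ) (hα : ∀ i, 0 ≤ α i)
    (hvalid : ValidIneq k r f α 1)
    (hshape : IsT3 (inducedSet k r f α))
    (hfint : f ∈ interior (inducedSet k r f α)) :
    splitRank k r f α 1 ≠ ⊤ :=
  t3_finite_split_rank_general k r f α hα hvalid hshape hfint
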